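/- arXiv:math/9805104 — 2 statements merged into one kernel-verified Lean document; each statement's English description precedes it below -/
import Mathlib

section
/- If a weak bialgebra A is both left-monoidal and right-monoidal, then the images of ε_LL and ε_RL commute element-wise: [ε_LL(A), ε_RL(A)] = 0, and likewise [ε_LR(A), ε_RR(A)] = 0. -/
open TensorProduct

noncomputable section

variable (K A : Type*) [Field K] [Ring A] [Algebra K A] [Coalgebra K A]

/-- The linear map `a ↦ a ⊗ 1`. -/
def inclL : A →ₗ[K] A ⊗[K] A := (TensorProduct.mk K A A).flip 1

/-- The linear map `a ↦ 1 ⊗ a`. -/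
def inclR : A →ₗ[K] A ⊗[K] A := TensorProduct.mk K A A 1

/-- `ε_LL(a) = ε(a 1₍₁₎) 1₍₂₎`. -/
def eLL : A →ₗ[K] A :=
  (TensorProduct.lid K A).toLinearMap ∘ₗ
    LinearMap.rTensor A (Coalgebra.counit (R := K) (A := A)) ∘ₗ
    LinearMap.mulRight K (Coalgebra.comul (R := K) (1 : A)) ∘ₗ inclL K A

/-- `ε_RR(a) = 1₍₁₎ ε(1₍₂₎ a)`. -/
def eRR : A →ₗ[K] A :=
  (TensorProduct.rid K A).toLinearMap ∘ₗ
    LinearMap.lTensor A (Coalgebra.counit (R := K) (A := A)) ∘ₗ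
    LinearMap.mulLeft K (Coalgebra.comul (R := K) (1 : A)) ∘ₗ inclR K A

/-- `ε_LR(a) = ε(1₍₁₎ a) 1₍₂₎`. -/
def eLR : A →ₗ[K] A :=
  (TensorProduct.lid K A).toLinearMap ∘ₗ
    LinearMap.rTensor A (Coalgebra.counit (R := K) (A := A)) ∘ₗ
    LinearMap.mulLeft K (Coalgebra.comul (R := K) (1 : A)) ∘ₗ inclL K A

/-- `ε_RL(a) = 1₍₁₎ ε(a 1₍₂₎)`. -/
def eRL : A →ₗ[K] A :=
  (TensorProduct.rid K A).toLinearMap ∘ₗ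
    LinearMap.lTensor A (Coalgebra.counit (R := K) (A := A)) ∘ₗ
    LinearMap.mulRight K (Coalgebra.comul (R := K) (1 : A)) ∘ₗ inclR K A

/-- Convolution product: `(conv f g)(a) = f(a₍₁₎) g(a₍₂₎)` (implicit Sweedler sums). -/
def conv (f g : A →ₗ[K] A) : A →ₗ[K] A :=
  LinearMap.mul' K A ∘ₗ TensorProduct.map f g ∘ₗ Coalgebra.comul (R := K)

/-- Opposite convolution: `(copConv f g)(a) = f(a₍₂₎) g(a₍₁₎)`. -/
def copConv (f g : A →ₗ[K] A) : A →ₗ[K] A :=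
  LinearMap.mul' K A ∘ₗ TensorProduct.map f g ∘ₗ
    (TensorProduct.comm K A A).toLinearMap ∘ₗ Coalgebra.comul (R := K)

/-- `ε ⊗ ε` as a functional on `A ⊗ A`. -/
def pairCC : A ⊗[K] A →ₗ[K] K :=
  (TensorProduct.lid K K).toLinearMap ∘ₗ
    TensorProduct.map (Coalgebra.counit (R := K) (A := A)) (Coalgebra.counit (R := K) (A := A))

/-- `a ↦ ε(a)·1`. -/
def epsUnit : A →ₗ[K] A := Algebra.linearMap K A ∘ₗ Coalgebra.counit (R := K)

/-- `b ↦ (x ↦ ε(b x))`, i.e. the map `ε_L : A → Â`. -/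
def epsLfun : A →ₗ[K] A →ₗ[K] K :=
  LinearMap.llcomp K A A K (Coalgebra.counit (R := K) (A := A)) ∘ₗ LinearMap.mul K A

/-- The weak-bialgebra axiom: the coproduct is multiplicative. -/
def WeakBialg : Prop :=
  ∀ a b : A, Coalgebra.comul (R := K) (a * b) =
    Coalgebra.comul (R := K) a * Coalgebra.comul (R := K) b

/-- `ε(abc) = ε(a b₍₁₎) ε(b₍₂₎ c)` for all `a b c`. -/
def LeftMonoidal : Prop :=
  ∀ a b c : A, Coalgebra.counit (R := K) (a * b * c) =
    pairCC K A ((a ⊗ₜ[K] (1 : A)) * Coalgebra.comul (R := K) b * ((1 : A) ⊗ₜ[K] c))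

/-- `ε(abc) = ε(a b₍₂₎) ε(b₍₁₎ c)` for all `a b c`. -/
def RightMonoidal : Prop :=
  ∀ a b c : A, Coalgebra.counit (R := K) (a * b * c) =
    pairCC K A ((a ⊗ₜ[K] (1 : A)) *
      (TensorProduct.comm K A A (Coalgebra.comul (R := K) b)) * ((1 : A) ⊗ₜ[K] c))

/-- `(Δ(1) ⊗ 1)(1 ⊗ Δ(1)) = (Δ ⊗ id)(Δ(1))`. -/
def LeftComonoidal : Prop :=
  ((Coalgebra.comul (R := K) (1 : A)) ⊗ₜ[K] (1 : A)) *
      ((TensorProduct.assoc K A A A).symm ((1 : A) ⊗ₜ[K] Coalgebra.comul (R := K) (1 : A))) =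
    LinearMap.rTensor A (Coalgebra.comul (R := K)) (Coalgebra.comul (R := K) (1 : A))

/-- `(1 ⊗ Δ(1))(Δ(1) ⊗ 1) = (Δ ⊗ id)(Δ(1))`. -/
def RightComonoidal : Prop :=
  ((TensorProduct.assoc K A A A).symm ((1 : A) ⊗ₜ[K] Coalgebra.comul (R := K) (1 : A))) *
      ((Coalgebra.comul (R := K) (1 : A)) ⊗ₜ[K] (1 : A)) =
    LinearMap.rTensor A (Coalgebra.comul (R := K)) (Coalgebra.comul (R := K) (1 : A))

/-- `N_LL(A) = {a | Δ(a) = a 1₍₁₎ ⊗ 1₍₂₎}`. -/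
def NLL : Set A :=
  {a : A | Coalgebra.comul (R := K) a =
    (a ⊗ₜ[K] (1 : A)) * Coalgebra.comul (R := K) (1 : A)}

/-- `N_LR(A) = {a | Δ(a) = 1₍₁₎ a ⊗ 1₍₂₎}`. -/
def NLR : Set A :=
  {a : A | Coalgebra.comul (R := K) a =
    Coalgebra.comul (R := K) (1 : A) * (a ⊗ₜ[K] (1 : A))}

/-- `N_RL(A) = {a | Δ(a) = 1₍₁₎ ⊗ a 1₍₂₎}`. -/
def NRL : Set A :=
  {a : A | Coalgebra.comul (R := K) a =
    ((1 : A) ⊗ₜ[K] a) * Coalgebra.comul (R := K) (1 : A)}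

/-- `N_RR(A) = {a | Δ(a) = 1₍₁₎ ⊗ 1₍₂₎ a}`. -/
def NRR : Set A :=
  {a : A | Coalgebra.comul (R := K) a =
    Coalgebra.comul (R := K) (1 : A) * ((1 : A) ⊗ₜ[K] a)}

/-- A subset which is a unital subalgebra. -/
def IsUnitalSub (S : Set A) : Prop :=
  (1 : A) ∈ S ∧ (∀ x ∈ S, ∀ y ∈ S, x * y ∈ S) ∧ (∀ x ∈ S, ∀ y ∈ S, x + y ∈ S) ∧
    ∀ (k : K), ∀ x ∈ S, k • x ∈ S

/-- `A_L = {φ(1₍₁₎) 1₍₂₎ : φ ∈ Â}`. -/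
def ALset : Set A :=
  {x : A | ∃ φ : A →ₗ[K] K,
    x = (TensorProduct.lid K A) (LinearMap.rTensor A φ (Coalgebra.comul (R := K) (1 : A)))}

/-- `A_R = {φ(1₍₂₎) 1₍₁₎ : φ ∈ Â}`. -/
def ARset : Set A :=
  {x : A | ∃ φ : A →ₗ[K] K,
    x = (TensorProduct.rid K A) (LinearMap.lTensor A φ (Coalgebra.comul (R := K) (1 : A)))}

/-!
Write `c ↼ φ = φ(c₁) c₂` and `φ ⇀ c = c₁ φ(c₂)` for the two actions of a functional `φ` on a
coalgebra; they commute by coassociativity. Left-monoidality upgrades `ε_LL(a) = 1 ↼ ε(a ·)` to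
`ε_LL(a) b = b ↼ ε(a ·)` for every `b`, and right-monoidality upgrades `ε_RL(a) = ε(a ·) ⇀ 1` to
`ε_RL(a) b = ε(a ·) ⇀ b`. So left multiplications by `ε_LL(a)` and by `ε_RL(b)` are commuting
operators, and evaluating at `1` gives the first commutator; the second is the same argument with
right multiplications.
-/

section Slice

variable {R M N P : Type*} [CommSemiring R] [AddCommMonoid M] [AddCommMonoid N] [AddCommMonoid P]
  [Module R M] [Module R N] [Module R P]

/-- The left slice map `m ⊗ n ↦ φ(m) n` of a functional `φ`. -/
def sliceLeft (φ : M →ₗ[R] R) : M ⊗[R] N →ₗ[R] N :=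
  (TensorProduct.lid R N).toLinearMap ∘ₗ φ.rTensor N

/-- The right slice map `m ⊗ n ↦ φ(n) m` of a functional `φ`. -/
def sliceRight (φ : N →ₗ[R] R) : M ⊗[R] N →ₗ[R] M :=
  (TensorProduct.rid R M).toLinearMap ∘ₗ φ.lTensor M

@[simp]
theorem sliceLeft_tmul (φ : M →ₗ[R] R) (m : M) (n : N) : sliceLeft φ (m ⊗ₜ[R] n) = φ m • n := by
  simp [sliceLeft]

@[simp]
theorem sliceRight_tmul (φ : N →ₗ[R] R) (m : M) (n : N) :
    sliceRight φ (m ⊗ₜ[R] n) = φ n • m := by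
  simp [sliceRight]

theorem sliceLeft_comm (φ : N →ₗ[R] R) (z : M ⊗[R] N) :
    sliceLeft φ (TensorProduct.comm R M N z) = sliceRight φ z := by
  induction z with
  | zero => simp
  | tmul m n => simp
  | add x y hx hy => simp only [map_add, hx, hy]

theorem sliceRight_comm (φ : M →ₗ[R] R) (z : M ⊗[R] N) :
    sliceRight φ (TensorProduct.comm R M N z) = sliceLeft φ z := by
  rw [← sliceLeft_comm, TensorProduct.comm_comm]

theorem map_sliceLeft (φ : M →ₗ[R] R) (f : N →ₗ[R] P) (z : M ⊗[R] N) :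
    f (sliceLeft φ z) = sliceLeft φ (f.lTensor M z) := by
  induction z with
  | zero => simp
  | tmul m n => simp
  | add x y hx hy => simp only [map_add, hx, hy]

theorem map_sliceRight (φ : N →ₗ[R] R) (f : M →ₗ[R] P) (z : M ⊗[R] N) :
    f (sliceRight φ z) = sliceRight φ (f.rTensor N z) := by
  induction z with
  | zero => simp
  | tmul m n => simp
  | add x y hx hy => simp only [map_add, hx, hy]

theorem sliceLeft_assoc (φ : M →ₗ[R] R) (z : (M ⊗[R] N) ⊗[R] P) :
    sliceLeft φ (TensorProduct.assoc R M N P z) = (sliceLeft φ).rTensor P z := by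
  suffices sliceLeft φ ∘ₗ (TensorProduct.assoc R M N P).toLinearMap = (sliceLeft φ).rTensor P from
    LinearMap.congr_fun this z
  ext m n p
  simp [TensorProduct.smul_tmul']

theorem sliceRight_assoc_symm (φ : P →ₗ[R] R) (z : M ⊗[R] (N ⊗[R] P)) :
    sliceRight φ ((TensorProduct.assoc R M N P).symm z) = (sliceRight φ).lTensor M z := by
  suffices sliceRight φ ∘ₗ (TensorProduct.assoc R M N P).symm.toLinearMap =
      (sliceRight φ).lTensor M from
    LinearMap.congr_fun this z
  ext m n p
  simp

end Slice

section SliceMul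

variable {R A A' B : Type*} [CommSemiring R] [Semiring A] [Semiring A'] [Semiring B]
  [Algebra R A] [Algebra R A'] [Algebra R B]

theorem sliceLeft_mul {φ : A →ₗ[R] R} {ψ : A' →ₗ[R] R} {f g : A →ₗ[R] A'}
    (h : ∀ u v, φ (u * v) = ψ (f u * g v)) (z w : A ⊗[R] B) :
    sliceLeft φ (z * w) = sliceLeft ψ (f.rTensor B z * g.rTensor B w) := by
  induction z with
  | zero => simp
  | add x y hx hy => simp only [map_add, hx, hy, add_mul]
  | tmul u b =>
    induction w with
    | zero => simp
    | add x y hx hy => simp only [map_add, hx, hy, mul_add]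
    | tmul v c => simp [h]

theorem sliceRight_mul {φ : A →ₗ[R] R} {ψ : A' →ₗ[R] R} {f g : A →ₗ[R] A'}
    (h : ∀ u v, φ (u * v) = ψ (f u * g v)) (z w : B ⊗[R] A) :
    sliceRight φ (z * w) = sliceRight ψ (f.lTensor B z * g.lTensor B w) := by
  induction z with
  | zero => simp
  | add x y hx hy => simp only [map_add, hx, hy, add_mul]
  | tmul b u =>
    induction w with
    | zero => simp
    | add x y hx hy => simp only [map_add, hx, hy, mul_add]
    | tmul c v => simp [h]

end SliceMul

section Hit

open Coalgebra

variable {R C : Type*} [CommSemiring R] [AddCommMonoid C] [Module R C] [Coalgebra R C]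

/-- The right hit action `c ↼ φ = φ(c₁) c₂` of a functional on a coalgebra. -/
def rightHit (φ : C →ₗ[R] R) : C →ₗ[R] C :=
  sliceLeft φ ∘ₗ comul

/-- The left hit action `φ ⇀ c = c₁ φ(c₂)` of a functional on a coalgebra. -/
def leftHit (φ : C →ₗ[R] R) : C →ₗ[R] C :=
  sliceRight φ ∘ₗ comul

@[simp]
theorem rightHit_counit (c : C) : rightHit (counit (R := R)) c = c := by
  simp [rightHit, sliceLeft]

@[simp]
theorem leftHit_counit (c : C) : leftHit (counit (R := R)) c = c := by
  simp [leftHit, sliceRight]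

theorem comul_rightHit (φ : C →ₗ[R] R) (c : C) :
    comul (R := R) (rightHit φ c) = (rightHit φ).rTensor C (comul c) := by
  calc comul (R := R) (rightHit φ c)
      = sliceLeft φ (comul.lTensor C (comul c)) := map_sliceLeft φ comul (comul c)
    _ = (sliceLeft φ).rTensor C (comul.rTensor C (comul c)) := by
      rw [← coassoc_apply, sliceLeft_assoc]
    _ = (rightHit φ).rTensor C (comul c) := (LinearMap.rTensor_comp_apply ..).symm

theorem comul_leftHit (φ : C →ₗ[R] R) (c : C) :
    comul (R := R) (leftHit φ c) = (leftHit φ).lTensor C (comul c) := by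
  calc comul (R := R) (leftHit φ c)
      = sliceRight φ (comul.rTensor C (comul c)) := map_sliceRight φ comul (comul c)
    _ = (sliceRight φ).lTensor C (comul.lTensor C (comul c)) := by
      rw [← coassoc_symm_apply, sliceRight_assoc_symm]
    _ = (leftHit φ).lTensor C (comul c) := (LinearMap.lTensor_comp_apply ..).symm

theorem rightHit_leftHit (φ ψ : C →ₗ[R] R) (c : C) :
    rightHit φ (leftHit ψ c) = leftHit ψ (rightHit φ c) := by
  calc rightHit φ (leftHit ψ c)
      = sliceLeft φ ((leftHit ψ).lTensor C (comul c)) := congrArg (sliceLeft φ) (comul_leftHit ψ c)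
    _ = leftHit ψ (rightHit φ c) := (map_sliceLeft φ (leftHit ψ) (comul c)).symm

end Hit

section HitMul

open Coalgebra

variable {R A : Type*} [CommSemiring R] [Semiring A] [Algebra R A] [Coalgebra R A]

/- Both sides are right-colinear for the coaction `a ⊗ b ↦ a₁ ⊗ b₁ ⊗ a₂ b₂`, hence determined by
their composites with the counit. -/
theorem rightHit_mul (hΔ : ∀ a b : A, comul (R := R) (a * b) = comul (R := R) a * comul (R := R) b)
    {φ ψ χ : A →ₗ[R] R}
    (h : ∀ u v, φ (u * v) = counit (R := R) (rightHit ψ u * rightHit χ v)) (a b : A) :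
    rightHit φ (a * b) = rightHit ψ a * rightHit χ b := by
  calc rightHit φ (a * b)
      = sliceLeft φ (comul a * comul b) := congrArg (sliceLeft φ) (hΔ a b)
    _ = sliceLeft counit ((rightHit ψ).rTensor A (comul a) * (rightHit χ).rTensor A (comul b)) :=
      sliceLeft_mul h _ _
    _ = rightHit counit (rightHit ψ a * rightHit χ b) := by
      rw [← comul_rightHit, ← comul_rightHit, ← hΔ]; rfl
    _ = rightHit ψ a * rightHit χ b := rightHit_counit _

theorem leftHit_mul (hΔ : ∀ a b : A, comul (R := R) (a * b) = comul (R := R) a * comul (R := R) b)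
    {φ ψ χ : A →ₗ[R] R}
    (h : ∀ u v, φ (u * v) = counit (R := R) (leftHit ψ u * leftHit χ v)) (a b : A) :
    leftHit φ (a * b) = leftHit ψ a * leftHit χ b := by
  calc leftHit φ (a * b)
      = sliceRight φ (comul a * comul b) := congrArg (sliceRight φ) (hΔ a b)
    _ = sliceRight counit ((leftHit ψ).lTensor A (comul a) * (leftHit χ).lTensor A (comul b)) :=
      sliceRight_mul h _ _
    _ = leftHit counit (leftHit ψ a * leftHit χ b) := by
      rw [← comul_leftHit, ← comul_leftHit, ← hΔ]; rfl
    _ = leftHit ψ a * leftHit χ b := leftHit_counit _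

end HitMul

section WeakBialgebra

open Coalgebra

variable {K A}

@[simp]
theorem epsLfun_apply (a x : A) : epsLfun K A a x = counit (R := K) (a * x) :=
  rfl

theorem pairCC_eq_counit_sliceLeft_mul (a c : A) (z : A ⊗[K] A) :
    pairCC K A ((a ⊗ₜ[K] (1 : A)) * z * ((1 : A) ⊗ₜ[K] c)) =
      counit (R := K) (sliceLeft (epsLfun K A a) z * c) := by
  induction z with
  | zero => simp
  | tmul x y => simp [pairCC]
  | add x y hx hy => simp only [map_add, mul_add, add_mul, hx, hy]

theorem pairCC_eq_counit_mul_sliceRight (a c : A) (z : A ⊗[K] A) :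
    pairCC K A ((a ⊗ₜ[K] (1 : A)) * z * ((1 : A) ⊗ₜ[K] c)) =
      counit (R := K) (a * sliceRight ((epsLfun K A).flip c) z) := by
  induction z with
  | zero => simp
  | tmul x y => simp [pairCC, mul_comm]
  | add x y hx hy => simp only [map_add, mul_add, add_mul, hx, hy]

theorem LeftMonoidal.counit_mul_mul_eq_rightHit (hL : LeftMonoidal K A) (a b c : A) :
    counit (R := K) (a * b * c) = counit (R := K) (rightHit (epsLfun K A a) b * c) :=
  (hL a b c).trans (pairCC_eq_counit_sliceLeft_mul a c (comul b))

theorem LeftMonoidal.counit_mul_mul_eq_leftHit (hL : LeftMonoidal K A) (a b c : A) :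
    counit (R := K) (a * b * c) = counit (R := K) (a * leftHit ((epsLfun K A).flip c) b) :=
  (hL a b c).trans (pairCC_eq_counit_mul_sliceRight a c (comul b))

theorem RightMonoidal.counit_mul_mul_eq_leftHit (hR : RightMonoidal K A) (a b c : A) :
    counit (R := K) (a * b * c) = counit (R := K) (leftHit (epsLfun K A a) b * c) := by
  rw [hR, pairCC_eq_counit_sliceLeft_mul, sliceLeft_comm]; rfl

theorem RightMonoidal.counit_mul_mul_eq_rightHit (hR : RightMonoidal K A) (a b c : A) :
    counit (R := K) (a * b * c) = counit (R := K) (a * rightHit ((epsLfun K A).flip c) b) := by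
  rw [hR, pairCC_eq_counit_mul_sliceRight, sliceRight_comm]; rfl

theorem eLL_eq_rightHit (a : A) : eLL K A a = rightHit (epsLfun K A a) 1 := by
  suffices sliceLeft counit ∘ₗ LinearMap.mulLeft K (a ⊗ₜ[K] (1 : A)) =
      sliceLeft (epsLfun K A a) from
    LinearMap.congr_fun this (comul 1)
  ext x y
  simp

theorem eLR_eq_rightHit (a : A) : eLR K A a = rightHit ((epsLfun K A).flip a) 1 := by
  suffices sliceLeft counit ∘ₗ LinearMap.mulRight K (a ⊗ₜ[K] (1 : A)) =
      sliceLeft ((epsLfun K A).flip a) from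
    LinearMap.congr_fun this (comul 1)
  ext x y
  simp

theorem eRL_eq_leftHit (a : A) : eRL K A a = leftHit (epsLfun K A a) 1 := by
  suffices sliceRight counit ∘ₗ LinearMap.mulLeft K ((1 : A) ⊗ₜ[K] a) =
      sliceRight (epsLfun K A a) from
    LinearMap.congr_fun this (comul 1)
  ext x y
  simp

theorem eRR_eq_leftHit (a : A) : eRR K A a = leftHit ((epsLfun K A).flip a) 1 := by
  suffices sliceRight counit ∘ₗ LinearMap.mulRight K ((1 : A) ⊗ₜ[K] a) =
      sliceRight ((epsLfun K A).flip a) from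
    LinearMap.congr_fun this (comul 1)
  ext x y
  simp

theorem eLL_mul (hΔ : WeakBialg K A) (hL : LeftMonoidal K A) (a b : A) :
    eLL K A a * b = rightHit (epsLfun K A a) b := by
  have h := rightHit_mul hΔ (φ := epsLfun K A a) (ψ := epsLfun K A a) (χ := counit)
    (fun u v => by simpa [mul_assoc] using hL.counit_mul_mul_eq_rightHit a u v) 1 b
  rw [one_mul, rightHit_counit, ← eLL_eq_rightHit] at h
  exact h.symm

theorem eRL_mul (hΔ : WeakBialg K A) (hR : RightMonoidal K A) (a b : A) :
    eRL K A a * b = leftHit (epsLfun K A a) b := by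
  have h := leftHit_mul hΔ (φ := epsLfun K A a) (ψ := epsLfun K A a) (χ := counit)
    (fun u v => by simpa [mul_assoc] using hR.counit_mul_mul_eq_leftHit a u v) 1 b
  rw [one_mul, leftHit_counit, ← eRL_eq_leftHit] at h
  exact h.symm

theorem mul_eLR (hΔ : WeakBialg K A) (hR : RightMonoidal K A) (a b : A) :
    b * eLR K A a = rightHit ((epsLfun K A).flip a) b := by
  have h := rightHit_mul hΔ (φ := (epsLfun K A).flip a) (ψ := counit) (χ := (epsLfun K A).flip a)
    (fun u v => by simpa using hR.counit_mul_mul_eq_rightHit u v a) b 1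
  rw [mul_one, rightHit_counit, ← eLR_eq_rightHit] at h
  exact h.symm

theorem mul_eRR (hΔ : WeakBialg K A) (hL : LeftMonoidal K A) (a b : A) :
    b * eRR K A a = leftHit ((epsLfun K A).flip a) b := by
  have h := leftHit_mul hΔ (φ := (epsLfun K A).flip a) (ψ := counit) (χ := (epsLfun K A).flip a)
    (fun u v => by simpa using hL.counit_mul_mul_eq_leftHit u v a) b 1
  rw [mul_one, leftHit_counit, ← eRR_eq_leftHit] at h
  exact h.symm

theorem stmt5_general (hΔ : WeakBialg K A) (hL : LeftMonoidal K A) (hR : RightMonoidal K A) :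
    (∀ a b : A, eLL K A a * eRL K A b = eRL K A b * eLL K A a) ∧
    (∀ a b : A, eLR K A a * eRR K A b = eRR K A b * eLR K A a) := by
  refine ⟨fun a b => ?_, fun a b => ?_⟩
  · calc eLL K A a * eRL K A b
        = rightHit (epsLfun K A a) (leftHit (epsLfun K A b) 1) := by
          rw [eLL_mul hΔ hL, eRL_eq_leftHit]
      _ = leftHit (epsLfun K A b) (rightHit (epsLfun K A a) 1) := rightHit_leftHit ..
      _ = eRL K A b * eLL K A a := by rw [eRL_mul hΔ hR, eLL_eq_rightHit]
  · calc eLR K A a * eRR K A b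
        = leftHit ((epsLfun K A).flip b) (rightHit ((epsLfun K A).flip a) 1) := by
          rw [mul_eRR hΔ hL, eLR_eq_rightHit]
      _ = rightHit ((epsLfun K A).flip a) (leftHit ((epsLfun K A).flip b) 1) :=
          (rightHit_leftHit ..).symm
      _ = eRR K A b * eLR K A a := by rw [mul_eLR hΔ hR, eRR_eq_leftHit]

end WeakBialgebra

/-- if `A` is left- and right-monoidal then
`[ε_LL(A), ε_RL(A)] = 0` and `[ε_LR(A), ε_RR(A)] = 0`. -/
theorem stmt5 [FiniteDimensional K A] (hΔ : WeakBialg K A)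
    (hL : LeftMonoidal K A) (hR : RightMonoidal K A) :
    (∀ a b : A, eLL K A a * eRL K A b = eRL K A b * eLL K A a) ∧
    (∀ a b : A, eLR K A a * eRR K A b = eRR K A b * eLR K A a) :=
  stmt5_general hΔ hL hR
end
end

section
/- Let A be a right-monoidal weak bialgebra (ε(abc) = ε(a b₍₂₎) ε(b₍₁₎ c) for all a, b, c) and S an anti-multiplicative pre-antipode on A. Then S is an antipode and the images ε_LR(A) and ε_RL(A) commute element-wise. -/
open TensorProduct

noncomputable section

variable (K A : Type*) [Field K] [Ring A] [Algebra K A] [Coalgebra K A]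

/-!
The argument takes place in the convolution algebra of linear maps `A →ₗ[K] A`, where
coassociativity is associativity and a functional such as `x ↦ ε(x b)` is viewed as the
scalar-valued map `x ↦ ε(x b) 1`. Right monoidality and multiplicativity of `Δ` give
`ε(a₍₁₎ b) a₍₂₎ = a ε_LR(b)` and `a₍₁₎ ε(b a₍₂₎) = ε_RL(b) a`.

By the second identity, anti-multiplicativity yields `S(a₍₁₎) ε_LR(a₍₂₎) = S(a) c` with the
constant `c = S(ε_RL(1₍₁₎)) 1₍₂₎`. Convolving with `id` on the left turns this into
`ε_LR(a) = ε_LR(a) c`, so `c = 1` and `S` is an antipode.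

Expanding `S(b a₍₂₎)` in `ε_LR(a) S(b) = a₍₁₎ S(b a₍₂₎)` by the antipode identity gives
`ε_LR(a) S(b) = ε_RL(b₍₁₎) ε_LR(a) S(b₍₂₎)`, from which both `ε_LR(a) ε_RL(b)` and
`ε_RL(b) ε_LR(a)` are seen to equal `ε_RL(b₍₁₎) ε_LR(a) ε_RL(b₍₂₎)`.
-/

section

variable {K A}

open Coalgebra LinearMap

local notation:70 f:70 " ⋆ " g:71 => conv _ _ f g

theorem conv_apply {ι : Type*} {a : A} (𝓡 : Coalgebra.Repr K a ι) (f g : A →ₗ[K] A) :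
    (f ⋆ g) a = ∑ i ∈ 𝓡.index, f (𝓡.left i) * g (𝓡.right i) := by
  simp [conv, ← 𝓡.eq]

theorem conv_assoc (f g h : A →ₗ[K] A) : f ⋆ g ⋆ h = f ⋆ (g ⋆ h) :=
  congrArg WithConv.ofConv <|
    mul_assoc (WithConv.toConv f) (WithConv.toConv g) (WithConv.toConv h)

theorem epsUnit_conv (f : A →ₗ[K] A) : epsUnit K A ⋆ f = f :=
  congrArg WithConv.ofConv <| one_mul (WithConv.toConv f)

theorem conv_epsUnit (f : A →ₗ[K] A) : f ⋆ epsUnit K A = f :=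
  congrArg WithConv.ofConv <| mul_one (WithConv.toConv f)

theorem sum_conv {ι : Type*} (s : Finset ι) (f : ι → A →ₗ[K] A) (g : A →ₗ[K] A) :
    (∑ i ∈ s, f i) ⋆ g = ∑ i ∈ s, f i ⋆ g := by
  ext a
  simp only [LinearMap.sum_apply, conv_apply (ℛ K a), Finset.sum_mul]
  exact Finset.sum_comm

theorem conv_sum {ι : Type*} (s : Finset ι) (f : A →ₗ[K] A) (g : ι → A →ₗ[K] A) :
    f ⋆ (∑ i ∈ s, g i) = ∑ i ∈ s, f ⋆ g i := by
  ext a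
  simp only [LinearMap.sum_apply, conv_apply (ℛ K a), Finset.mul_sum]
  exact Finset.sum_comm

theorem mulLeft_comp_conv (c : A) (f g : A →ₗ[K] A) :
    mulLeft K c ∘ₗ (f ⋆ g) = (mulLeft K c ∘ₗ f) ⋆ g := by
  ext a
  simp [conv_apply (ℛ K a), mul_assoc]

theorem mulRight_comp_conv (c : A) (f g : A →ₗ[K] A) :
    mulRight K c ∘ₗ (f ⋆ g) = f ⋆ (mulRight K c ∘ₗ g) := by
  ext a
  simp [conv_apply (ℛ K a), mul_assoc]

theorem conv_mulLeft_comp (c : A) (f g : A →ₗ[K] A) :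
    f ⋆ (mulLeft K c ∘ₗ g) = (mulRight K c ∘ₗ f) ⋆ g := by
  ext a
  simp [conv_apply (ℛ K a), mul_assoc]

theorem comp_conv_epsUnit_comp (f g h : A →ₗ[K] A) :
    f ∘ₗ (g ⋆ (epsUnit K A ∘ₗ h)) = (f ∘ₗ g) ⋆ (epsUnit K A ∘ₗ h) := by
  ext a
  simp [conv_apply (ℛ K a), epsUnit, ← Algebra.commutes, ← Algebra.smul_def]

theorem mulRight_comp_epsUnit (c : A) :
    mulRight K c ∘ₗ epsUnit K A = mulLeft K c ∘ₗ epsUnit K A := by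
  ext a
  exact Algebra.commutes _ c

theorem WeakBialg.conv_comp_mulLeft (hΔ : WeakBialg K A) {ι : Type*} {a : A}
    (𝓡 : Coalgebra.Repr K a ι) (f g : A →ₗ[K] A) :
    (f ⋆ g) ∘ₗ mulLeft K a =
      ∑ i ∈ 𝓡.index, (f ∘ₗ mulLeft K (𝓡.left i)) ⋆ (g ∘ₗ mulLeft K (𝓡.right i)) := by
  ext b
  simp [conv, hΔ a b, ← 𝓡.eq, ← (ℛ K b).eq, Finset.sum_mul_sum]

theorem WeakBialg.conv_comp_mulRight (hΔ : WeakBialg K A) {ι : Type*} {b : A}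
    (𝓡 : Coalgebra.Repr K b ι) (f g : A →ₗ[K] A) :
    (f ⋆ g) ∘ₗ mulRight K b =
      ∑ i ∈ 𝓡.index, (f ∘ₗ mulRight K (𝓡.left i)) ⋆ (g ∘ₗ mulRight K (𝓡.right i)) := by
  ext a
  simp [conv, hΔ a b, ← 𝓡.eq, ← (ℛ K a).eq, Finset.sum_mul_sum, Finset.sum_comm (s := 𝓡.index)]

theorem eLR_apply {ι : Type*} (𝓡 : Coalgebra.Repr K (1 : A) ι) (a : A) :
    eLR K A a = ∑ i ∈ 𝓡.index, counit (R := K) (𝓡.left i * a) • 𝓡.right i := by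
  simp [eLR, inclL, ← 𝓡.eq, Finset.sum_mul]

theorem eRL_apply {ι : Type*} (𝓡 : Coalgebra.Repr K (1 : A) ι) (a : A) :
    eRL K A a = ∑ i ∈ 𝓡.index, counit (R := K) (a * 𝓡.right i) • 𝓡.left i := by
  simp [eRL, inclR, ← 𝓡.eq, Finset.mul_sum]

theorem RightMonoidal.conv_epsUnit_comp (hmono : RightMonoidal K A) (a c : A) :
    (epsUnit K A ∘ₗ mulRight K c) ⋆ (epsUnit K A ∘ₗ mulLeft K a) =
      epsUnit K A ∘ₗ mulRight K c ∘ₗ mulLeft K a := by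
  ext b
  simp [conv_apply (ℛ K b), epsUnit, hmono a b c, pairCC, ← (ℛ K b).eq, Finset.mul_sum,
    Finset.sum_mul, mul_comm]

theorem eLR_eq_conv_one (b : A) :
    eLR K A b = ((epsUnit K A ∘ₗ mulRight K b) ⋆ id) 1 := by
  simp [conv_apply (ℛ K (1 : A)), eLR_apply (ℛ K 1), epsUnit, Algebra.smul_def]

theorem eRL_eq_conv_one (b : A) :
    eRL K A b = (id ⋆ (epsUnit K A ∘ₗ mulLeft K b)) 1 := by
  simp [conv_apply (ℛ K (1 : A)), eRL_apply (ℛ K 1), epsUnit, Algebra.smul_def, Algebra.commutes]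

theorem epsUnit_comp_mulRight_conv_id (hΔ : WeakBialg K A) (hmono : RightMonoidal K A) (b : A) :
    (epsUnit K A ∘ₗ mulRight K b) ⋆ id = mulRight K (eLR K A b) := by
  ext a
  set φ := epsUnit K A ∘ₗ mulRight K b with hφ
  have hcomm : (φ ⋆ id) ∘ₗ mulLeft K a = mulLeft K a ∘ₗ (φ ⋆ id) := calc
    (φ ⋆ id) ∘ₗ mulLeft K a
      = ∑ i ∈ (ℛ K a).index, φ ⋆ (epsUnit K A ∘ₗ mulLeft K ((ℛ K a).left i)) ⋆
          mulLeft K ((ℛ K a).right i) := by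
        simp only [hΔ.conv_comp_mulLeft (ℛ K a), hφ, hmono.conv_epsUnit_comp, comp_assoc, id_comp]
    _ = φ ⋆ ((epsUnit K A ⋆ id) ∘ₗ mulLeft K a) := by
        simp only [hΔ.conv_comp_mulLeft (ℛ K a), conv_sum, conv_assoc, id_comp]
    _ = φ ⋆ (mulLeft K a ∘ₗ id) := by rw [epsUnit_conv, id_comp, comp_id]
    _ = mulLeft K a ∘ₗ (φ ⋆ id) := by
        rw [conv_mulLeft_comp, mulLeft_comp_conv, hφ, ← comp_assoc,
          mulRight_comp_epsUnit, comp_assoc]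
  simpa [eLR_eq_conv_one] using LinearMap.congr_fun hcomm 1

theorem id_conv_epsUnit_comp_mulLeft (hΔ : WeakBialg K A) (hmono : RightMonoidal K A) (b : A) :
    id ⋆ (epsUnit K A ∘ₗ mulLeft K b) = mulLeft K (eRL K A b) := by
  ext a
  set φ := epsUnit K A ∘ₗ mulLeft K b with hφ
  have hcomp (c : A) : φ ∘ₗ mulRight K c = (epsUnit K A ∘ₗ mulRight K c) ⋆ φ := by
    rw [hφ, hmono.conv_epsUnit_comp]
    exact congrArg (epsUnit K A ∘ₗ ·) (commute_mulLeft_right (R := K) b c)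
  have hcomm : (id ⋆ φ) ∘ₗ mulRight K a = mulRight K a ∘ₗ (id ⋆ φ) := calc
    (id ⋆ φ) ∘ₗ mulRight K a
      = ∑ i ∈ (ℛ K a).index, mulRight K ((ℛ K a).left i) ⋆
          ((epsUnit K A ∘ₗ mulRight K ((ℛ K a).right i)) ⋆ φ) := by
        simp only [hΔ.conv_comp_mulRight (ℛ K a), hcomp, id_comp]
    _ = ((id ⋆ epsUnit K A) ∘ₗ mulRight K a) ⋆ φ := by
        simp only [hΔ.conv_comp_mulRight (ℛ K a), sum_conv, conv_assoc, id_comp]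
    _ = (mulRight K a ∘ₗ id) ⋆ φ := by rw [conv_epsUnit, id_comp, comp_id]
    _ = mulRight K a ∘ₗ (id ⋆ φ) := by
        rw [← conv_mulLeft_comp, mulRight_comp_conv, hφ, ← comp_assoc,
          ← mulRight_comp_epsUnit, comp_assoc]
  simpa [eRL_eq_conv_one] using LinearMap.congr_fun hcomm 1

theorem eLR_comp_mulRight_conv_id (hΔ : WeakBialg K A) (a : A) :
    (eLR K A ∘ₗ mulRight K a) ⋆ id = (epsUnit K A ∘ₗ mulRight K a) ⋆ id := by
  set φ := epsUnit K A ∘ₗ mulRight K a with hφ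
  have hsum : eLR K A ∘ₗ mulRight K a = ∑ i ∈ (ℛ K (1 : A)).index,
      mulRight K ((ℛ K (1 : A)).right i) ∘ₗ φ ∘ₗ mulLeft K ((ℛ K (1 : A)).left i) := by
    ext b
    simp [eLR_apply (ℛ K 1), hφ, epsUnit, Algebra.smul_def, mul_assoc]
  calc (eLR K A ∘ₗ mulRight K a) ⋆ id
      = (φ ⋆ id) ∘ₗ mulLeft K 1 := by
        simp only [hsum, sum_conv, ← conv_mulLeft_comp,
          hΔ.conv_comp_mulLeft (ℛ K 1), comp_id, id_comp]
    _ = φ ⋆ id := by rw [mulLeft_one, comp_id]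

theorem id_conv_eRL_comp_mulLeft (hΔ : WeakBialg K A) (b : A) :
    id ⋆ (eRL K A ∘ₗ mulLeft K b) = id ⋆ (epsUnit K A ∘ₗ mulLeft K b) := by
  set φ := epsUnit K A ∘ₗ mulLeft K b with hφ
  have hsum : eRL K A ∘ₗ mulLeft K b = ∑ i ∈ (ℛ K (1 : A)).index,
      mulLeft K ((ℛ K (1 : A)).left i) ∘ₗ φ ∘ₗ mulRight K ((ℛ K (1 : A)).right i) := by
    ext a
    simp [eRL_apply (ℛ K 1), hφ, epsUnit, Algebra.smul_def, Algebra.commutes, mul_assoc]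
  calc id ⋆ (eRL K A ∘ₗ mulLeft K b)
      = (id ⋆ φ) ∘ₗ mulRight K 1 := by
        simp only [hsum, conv_sum, conv_mulLeft_comp,
          hΔ.conv_comp_mulRight (ℛ K 1), comp_id, id_comp]
    _ = id ⋆ φ := by rw [mulRight_one, comp_id]

theorem eLR_one : eLR K A 1 = 1 := by
  rw [eLR_eq_conv_one, mulRight_one, comp_id, epsUnit_conv, id_apply]

theorem eLR_conv_id (hΔ : WeakBialg K A) : eLR K A ⋆ id = LinearMap.id := by
  simpa only [mulRight_one, comp_id, epsUnit_conv] using eLR_comp_mulRight_conv_id hΔ 1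

omit [Coalgebra K A] in
theorem comp_mulLeft_of_antimul {S : A →ₗ[K] A} (hanti : ∀ a b : A, S (a * b) = S b * S a)
    (a : A) : S ∘ₗ mulLeft K a = mulRight K (S a) ∘ₗ S := by
  ext b
  exact hanti a b

theorem exists_conv_eLR_eq_mulRight_comp (hΔ : WeakBialg K A) (hmono : RightMonoidal K A)
    {S : A →ₗ[K] A} (hanti : ∀ a b : A, S (a * b) = S b * S a) :
    ∃ c : A, S ⋆ eLR K A = mulRight K c ∘ₗ S := by
  let 𝓡 := ℛ K (1 : A)
  refine ⟨∑ i ∈ 𝓡.index, S (eRL K A (𝓡.left i)) * 𝓡.right i, ?_⟩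
  have hε (x : A) : S ⋆ (epsUnit K A ∘ₗ mulLeft K x) = mulRight K (S (eRL K A x)) ∘ₗ S := calc
    S ⋆ (epsUnit K A ∘ₗ mulLeft K x) = S ∘ₗ (id ⋆ (epsUnit K A ∘ₗ mulLeft K x)) := by
      rw [comp_conv_epsUnit_comp, comp_id]
    _ = mulRight K (S (eRL K A x)) ∘ₗ S := by
      rw [id_conv_epsUnit_comp_mulLeft hΔ hmono, comp_mulLeft_of_antimul hanti]
  have hL : eLR K A =
      ∑ i ∈ 𝓡.index, mulRight K (𝓡.right i) ∘ₗ epsUnit K A ∘ₗ mulLeft K (𝓡.left i) := by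
    ext a
    simp [eLR_apply 𝓡, epsUnit, Algebra.smul_def]
  rw [hL, conv_sum]
  simp only [← mulRight_comp_conv, hε]
  ext a
  simp [Finset.mul_sum, mul_assoc]

theorem conv_eLR_of_antimul (hΔ : WeakBialg K A) (hmono : RightMonoidal K A) {S : A →ₗ[K] A}
    (hLR : id ⋆ S = eLR K A) (hanti : ∀ a b : A, S (a * b) = S b * S a) :
    S ⋆ eLR K A = S := by
  obtain ⟨c, hc⟩ := exists_conv_eLR_eq_mulRight_comp hΔ hmono hanti
  have hmul : mulRight K c ∘ₗ eLR K A = eLR K A := calc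
    mulRight K c ∘ₗ eLR K A = id ⋆ (S ⋆ eLR K A) := by rw [hc, ← mulRight_comp_conv, hLR]
    _ = eLR K A ⋆ id ⋆ S := by rw [← conv_assoc, conv_assoc _ _ S, hLR]
    _ = eLR K A := by rw [eLR_conv_id hΔ, hLR]
  have hc_one : c = 1 := by simpa [eLR_one] using LinearMap.congr_fun hmul 1
  rw [hc, hc_one, mulRight_one, id_comp]

theorem eRL_conv_of_antimul (hΔ : WeakBialg K A) (hmono : RightMonoidal K A) {S : A →ₗ[K] A}
    (hLR : id ⋆ S = eLR K A) (hRL : S ⋆ id = eRL K A)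
    (hanti : ∀ a b : A, S (a * b) = S b * S a) :
    eRL K A ⋆ S = S := by
  rw [← hRL, conv_assoc, hLR, conv_eLR_of_antimul hΔ hmono hLR hanti]

theorem mulLeft_eLR_comp_eq_eRL_conv (hΔ : WeakBialg K A) (hmono : RightMonoidal K A)
    {S : A →ₗ[K] A} (hLR : id ⋆ S = eLR K A) (hRL : S ⋆ id = eRL K A)
    (hanti : ∀ a b : A, S (a * b) = S b * S a) (a : A) :
    mulLeft K (eLR K A a) ∘ₗ S = eRL K A ⋆ (mulLeft K (eLR K A a) ∘ₗ S) := by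
  have hS := eRL_conv_of_antimul hΔ hmono hLR hRL hanti
  have hmul (c : A) : id ⋆ (S ∘ₗ mulLeft K c) = mulRight K (S c) ∘ₗ eLR K A := by
    rw [comp_mulLeft_of_antimul hanti, ← mulRight_comp_conv, hLR]
  ext b
  let 𝓡 := ℛ K b
  have hterm (x y : A) : id ⋆ ((eRL K A ∘ₗ mulLeft K x) ⋆ (S ∘ₗ mulLeft K y)) =
      mulLeft K (eRL K A x) ∘ₗ mulRight K (S y) ∘ₗ eLR K A := by
    rw [← conv_assoc, id_conv_eRL_comp_mulLeft hΔ, id_conv_epsUnit_comp_mulLeft hΔ hmono, ← hmul,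
      mulLeft_comp_conv, comp_id]
  have hsum : mulRight K (S b) ∘ₗ eLR K A = ∑ i ∈ 𝓡.index,
      mulLeft K (eRL K A (𝓡.left i)) ∘ₗ mulRight K (S (𝓡.right i)) ∘ₗ eLR K A := by
    rw [← hmul, ← hS, hΔ.conv_comp_mulLeft 𝓡, conv_sum, hS]
    exact Finset.sum_congr rfl fun i _ => hterm _ _
  simpa [conv_apply 𝓡] using LinearMap.congr_fun hsum a

theorem commute_eLR_eRL (hΔ : WeakBialg K A) (hmono : RightMonoidal K A) {S : A →ₗ[K] A}
    (hLR : id ⋆ S = eLR K A) (hRL : S ⋆ id = eRL K A)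
    (hanti : ∀ a b : A, S (a * b) = S b * S a) (a b : A) :
    Commute (eLR K A a) (eRL K A b) := by
  set l := eLR K A a with hl
  have hleft : mulLeft K l ∘ₗ eRL K A = eRL K A ⋆ (mulLeft K l ∘ₗ eRL K A) := calc
    mulLeft K l ∘ₗ eRL K A = (mulLeft K l ∘ₗ S) ⋆ id := by rw [← hRL, mulLeft_comp_conv]
    _ = eRL K A ⋆ (mulLeft K l ∘ₗ S) ⋆ id := by
      rw [hl, ← mulLeft_eLR_comp_eq_eRL_conv hΔ hmono hLR hRL hanti]
    _ = eRL K A ⋆ (mulLeft K l ∘ₗ eRL K A) := by rw [conv_assoc, ← mulLeft_comp_conv, hRL]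
  have hmulRight : mulRight K l = mulRight K l ⋆ eRL K A := calc
    mulRight K l = (eLR K A ∘ₗ mulRight K a) ⋆ id := by
      rw [eLR_comp_mulRight_conv_id hΔ, epsUnit_comp_mulRight_conv_id hΔ hmono]
    _ = (eLR K A ∘ₗ mulRight K a) ⋆ (eLR K A ⋆ id) := by rw [eLR_conv_id hΔ]
    _ = (eLR K A ∘ₗ mulRight K a) ⋆ id ⋆ (S ⋆ id) := by simp only [← hLR, conv_assoc]
    _ = mulRight K l ⋆ eRL K A := by
      rw [eLR_comp_mulRight_conv_id hΔ, epsUnit_comp_mulRight_conv_id hΔ hmono, hRL]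
  have hright : mulRight K l ∘ₗ eRL K A = eRL K A ⋆ (mulLeft K l ∘ₗ eRL K A) := calc
    mulRight K l ∘ₗ eRL K A = S ⋆ mulRight K l := by rw [← hRL, mulRight_comp_conv, comp_id]
    _ = S ⋆ ((mulRight K l ∘ₗ id) ⋆ eRL K A) := by rw [comp_id, ← hmulRight]
    _ = eRL K A ⋆ (mulLeft K l ∘ₗ eRL K A) := by
      rw [← conv_mulLeft_comp, ← conv_assoc, hRL]
  exact LinearMap.congr_fun (hleft.trans hright.symm) b

end

theorem stmt17_general (hΔ : WeakBialg K A) (hmono : RightMonoidal K A) (S : A →ₗ[K] A)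
    (hpre1 : conv K A LinearMap.id S = eLR K A)
    (hpre2 : conv K A S LinearMap.id = eRL K A)
    (hanti : ∀ a b : A, S (a * b) = S b * S a) :
    (∀ a : A, conv K A (conv K A S LinearMap.id) S a = S a) ∧
    (∀ a b : A, eLR K A a * eRL K A b = eRL K A b * eLR K A a) := by
  rw [hpre2]
  exact ⟨LinearMap.congr_fun (eRL_conv_of_antimul hΔ hmono hpre1 hpre2 hanti),
    commute_eLR_eRL hΔ hmono hpre1 hpre2 hanti⟩

/-- on a right-monoidal weak bialgebra an anti-multiplicative
pre-antipode is an antipode, and `ε_LR(A)` commutes with `ε_RL(A)`. -/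
theorem stmt17 [FiniteDimensional K A] (hΔ : WeakBialg K A)
    (hmono : RightMonoidal K A) (S : A →ₗ[K] A)
    (hpre1 : conv K A LinearMap.id S = eLR K A)
    (hpre2 : conv K A S LinearMap.id = eRL K A)
    (hanti : ∀ a b : A, S (a * b) = S b * S a) :
    (∀ a : A, conv K A (conv K A S LinearMap.id) S a = S a) ∧
    (∀ a b : A, eLR K A a * eRL K A b = eRL K A b * eLR K A a) :=
  stmt17_general K A hΔ hmono S hpre1 hpre2 hanti
end
end
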